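/- Let C be a regular, irreducible curve that is projective over a field k, with function field F = k(C), arithmetic genus t, and a k-rational point O. Suppose P ≠ O is a closed point with d = deg(P) ≥ 3t + 1, and l_1^+, l_2^+, l_1^− are nonzero elements of RR_{d−1}. Then there exist nonzero m^+, m^− in RR_{d−1} such that {f_P, l_1^+} + {f_P, l_2^+} − {f_P, l_1^−} ≡ {f_P, m^+} − {f_P, m^−} modulo the subgroup F_{d−1} of K₂(F). -/

import Mathlib

open scoped TensorProduct

noncomputable section

/-- The set of Steinberg relations in `Fˣ ⊗_ℤ Fˣ` (written additively):
the elements `a ⊗ b` with `a + b = 1` in `F`. -/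
def SteinbergSet (F : Type*) [Field F] :
    Set (TensorProduct ℤ (Additive Fˣ) (Additive Fˣ)) :=
  { x | ∃ a b : Fˣ, (a : F) + (b : F) = 1 ∧
      x = Additive.ofMul a ⊗ₜ[ℤ] Additive.ofMul b }

/-- Milnor's `K₂` of a field, via Matsumoto's presentation. -/
abbrev K2 (F : Type*) [Field F] :=
  (TensorProduct ℤ (Additive Fˣ) (Additive Fˣ)) ⧸
    Submodule.span ℤ (SteinbergSet F)

/-- The symbol `{f, g}` in `K₂(F)`. -/
def symbol {F : Type*} [Field F] (f g : Fˣ) : K2 F :=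
  Submodule.Quotient.mk (Additive.ofMul f ⊗ₜ[ℤ] Additive.ofMul g)

/-- The degree of a divisor `D` on the curve: `∑_P deg(P) · D(P)`,
where `deg P = [k(P) : k]`. -/
def divDeg (k : Type*) [Field k] {Pt : Type*} (res : Pt → Type*)
    [∀ P, Field (res P)] [∀ P, Algebra k (res P)] (D : Pt →₀ ℤ) : ℤ :=
  ∑ᶠ P, (Module.finrank k (res P) : ℤ) * D P

/-- Axioms for a regular, irreducible curve `C`, projective over a field `k`, with
`H⁰(C, O_C) = k`, presented through: its function field `F = k(C)`, its set `Pt` of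
closed points, the residue fields `res P = k(P)`, the normalized valuations `ord P`,
the evaluation maps `ev P` (evaluation at `P` of functions regular at `P`), the
Riemann-Roch spaces `L D = H⁰(C, O_C(D))`, and the arithmetic genus
`t = dim_k H¹(C, O_C)`, characterized by the Riemann-Roch relations. -/
structure IsProjCurve (k F : Type*) [Field k] [Field F] [Algebra k F]
    {Pt : Type*} (res : Pt → Type*) [∀ P, Field (res P)] [∀ P, Algebra k (res P)]
    (ord : Pt → F → ℤ) (ev : ∀ P, F → res P)
    (L : (Pt →₀ ℤ) → Submodule k F) (t : ℕ) : Prop where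
  finiteDimensional_res : ∀ P, FiniteDimensional k (res P)
  ord_mul : ∀ P (f g : F), f ≠ 0 → g ≠ 0 → ord P (f * g) = ord P f + ord P g
  ord_add : ∀ P (f g : F), f ≠ 0 → g ≠ 0 → f + g ≠ 0 →
      min (ord P f) (ord P g) ≤ ord P (f + g)
  ord_algebraMap : ∀ P (c : k), c ≠ 0 → ord P (algebraMap k F c) = 0
  ord_uniformizer : ∀ P, ∃ f : F, f ≠ 0 ∧ ord P f = 1
  ord_separates : ∀ P Q, (∀ f : F, ord P f = ord Q f) → P = Q
  support_finite : ∀ f : F, f ≠ 0 → {P | ord P f ≠ 0}.Finite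
  degree_formula : ∀ f : F, f ≠ 0 →
      ∑ᶠ P, (Module.finrank k (res P) : ℤ) * ord P f = 0
  ev_zero : ∀ P, ev P 0 = 0
  ev_one : ∀ P, ev P 1 = 1
  ev_add : ∀ P (f g : F), f ≠ 0 → g ≠ 0 → 0 ≤ ord P f → 0 ≤ ord P g →
      ev P (f + g) = ev P f + ev P g
  ev_mul : ∀ P (f g : F), f ≠ 0 → g ≠ 0 → 0 ≤ ord P f → 0 ≤ ord P g →
      ev P (f * g) = ev P f * ev P g
  ev_algebraMap : ∀ P (c : k), ev P (algebraMap k F c) = algebraMap k (res P) c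
  ev_eq_zero_iff : ∀ P (f : F), f ≠ 0 → 0 ≤ ord P f → (ev P f = 0 ↔ 0 < ord P f)
  ev_surjective : ∀ P (y : res P), ∃ f : F, f ≠ 0 ∧ 0 ≤ ord P f ∧ ev P f = y
  mem_L : ∀ (D : Pt →₀ ℤ) (f : F), f ∈ L D ↔ (f ≠ 0 → ∀ P, 0 ≤ D P + ord P f)
  finiteDimensional_L : ∀ D, FiniteDimensional k (L D)
  global_sections : ∀ f : F, f ∈ L 0 ↔ ∃ c : k, algebraMap k F c = f
  rr_ineq : ∀ D : Pt →₀ ℤ,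
      divDeg k res D + 1 - t ≤ (Module.finrank k (L D) : ℤ)
  rr_eq : ∀ D : Pt →₀ ℤ, 2 * (t : ℤ) - 2 < divDeg k res D →
      (Module.finrank k (L D) : ℤ) = divDeg k res D + 1 - t

/-- `T` is the tame symbol `K₂(F) → ∐_{P} k(P)^*`: it is determined by
`T_P({f,g}) = (-1)^{ord_P(f)·ord_P(g)} (f^{ord_P(g)} / g^{ord_P(f)})(P)`. -/
def IsTameSymbol {F : Type*} [Field F] {Pt : Type*} {res : Pt → Type*}
    [∀ P, Field (res P)]
    (ord : Pt → F → ℤ) (ev : ∀ P, F → res P)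
    (T : K2 F →+ Π₀ P : Pt, Additive ((res P)ˣ)) : Prop :=
  ∀ (f g : Fˣ) (P : Pt),
    ((Additive.toMul (T (symbol f g) P) : (res P)ˣ) : res P) =
      ev P (((-1 : Fˣ) ^ (ord P (f : F) * ord P (g : F)) *
        f ^ (ord P (g : F)) * g ^ (-ord P (f : F)) : Fˣ) : F)

/-- `F_d`: the subgroup of `K₂(F)` generated by the symbols `{f, g}` with
`|(f)| ∪ |(g)| ⊆ C_{≤ d}`. -/
def Fsub (k : Type*) [Field k] {F : Type*} [Field F] {Pt : Type*} (res : Pt → Type*)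
    [∀ P, Field (res P)] [∀ P, Algebra k (res P)]
    (ord : Pt → F → ℤ) (d : ℕ) : AddSubgroup (K2 F) :=
  AddSubgroup.closure
    { x | ∃ f g : Fˣ,
        (∀ P, ord P (f : F) ≠ 0 → Module.finrank k (res P) ≤ d) ∧
        (∀ P, ord P (g : F) ≠ 0 → Module.finrank k (res P) ≤ d) ∧
        x = symbol f g }

/-!
Write `U_n` for the functions whose divisor is supported in degree at most `n`.

If `a - b = f * g`, the Steinberg relation for `f * g / a + b / a = 1` gives
`{f, a} - {f, b} = {g / a, b / a}`, in which `f` no longer occurs. Take `f = f_P` and let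
`a, b ∈ U_{d-1}` have the same value at `P` and poles at most `2(d - 1)(O)`: then
`g = (a - b) / f_P` lies in `L((d + t - 2)(O) - D_P)`, where the divisor has degree `d - 2`, so
`g ∈ U_{d-1}`. Hence, modulo `F_{d-1}`, the symbol `{f_P, a}` depends only on `a(P)`.

It remains to find nonzero `w`, `x`, `y` in `RR_{d-1}` with `l₁⁺ x = l₁⁻ w` and `w l₂⁺ = y` at `P`:
then `m⁺ = y` and `m⁻ = x` work. By Riemann–Roch the image of `RR_{d-1}` in `k(P)` has codimension
at most `t`, so, as `3t < d`, some `v ≠ 0` in `k(P)` has all of `l₁⁺(P) v`, `l₁⁻(P) v` and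
`l₁⁺(P) l₂⁺(P) v` in that image; these are the values of `w`, `x` and `y` at `P`.
-/

section Symbols

variable {F : Type*} [Field F]

lemma symbol_mul_left (a b c : Fˣ) : symbol (a * b) c = symbol a c + symbol b c := by
  simp only [symbol, ofMul_mul, TensorProduct.add_tmul, Submodule.Quotient.mk_add]

lemma symbol_mul_right (a b c : Fˣ) : symbol a (b * c) = symbol a b + symbol a c := by
  simp only [symbol, ofMul_mul, TensorProduct.tmul_add, Submodule.Quotient.mk_add]

lemma symbol_div_right (a b c : Fˣ) : symbol a (b / c) = symbol a b - symbol a c := by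
  rw [eq_sub_iff_add_eq, ← symbol_mul_right, div_mul_cancel]

lemma symbol_one_right (a : Fˣ) : symbol a 1 = 0 := by
  simp only [symbol, ofMul_one, TensorProduct.tmul_zero, Submodule.Quotient.mk_zero]

lemma symbol_eq_zero_of_add_eq_one {a b : Fˣ} (h : (a : F) + b = 1) : symbol a b = 0 :=
  (Submodule.Quotient.mk_eq_zero _).2 (Submodule.subset_span ⟨a, b, h, rfl⟩)

lemma symbol_sub_symbol_of_sub_eq_mul {a b f g : Fˣ} (h : (a : F) - b = f * g) :
    symbol f a - symbol f b = symbol (g / a) (b / a) := by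
  have hone : ((f * (g / a) : Fˣ) : F) + (b / a : Fˣ) = 1 := by
    push_cast
    rw [← mul_div_assoc, ← h, ← add_div, sub_add_cancel, div_self a.ne_zero]
  have hsteinberg := symbol_eq_zero_of_add_eq_one hone
  rw [symbol_mul_left, symbol_div_right f] at hsteinberg
  rw [← neg_sub, neg_eq_iff_add_eq_zero, hsteinberg]

end Symbols

lemma exists_ne_zero_forall_apply_mem {k W M ι : Type*} [DivisionRing k] [AddCommGroup W]
    [Module k W] [AddCommGroup M] [Module k M] [Fintype ι] (V : Submodule k M)
    [FiniteDimensional k (M ⧸ V)] (φ : ι → W →ₗ[k] M)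
    (h : Fintype.card ι * Module.finrank k (M ⧸ V) < Module.finrank k W) :
    ∃ v ≠ 0, ∀ i, φ i v ∈ V := by
  have : FiniteDimensional k W := Module.finite_of_finrank_pos (Nat.zero_lt_of_lt h)
  have hker : LinearMap.ker (LinearMap.pi fun i => V.mkQ ∘ₗ φ i) ≠ ⊥ :=
    LinearMap.ker_ne_bot_of_finrank_lt <| by
      rwa [Module.finrank_pi_fintype, Finset.sum_const, Finset.card_univ, smul_eq_mul]
  obtain ⟨v, hv, hv0⟩ := Submodule.exists_mem_ne_zero_of_ne_bot hker
  exact ⟨v, hv0, fun i => (Submodule.Quotient.mk_eq_zero V).1 (congrFun hv i)⟩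

section Divisors

variable {k : Type*} [Field k] {Pt : Type*} {res : Pt → Type*}
  [∀ P, Field (res P)] [∀ P, Algebra k (res P)]

lemma divDeg_eq_linearCombination (D : Pt →₀ ℤ) :
    divDeg k res D = Finsupp.linearCombination ℤ (fun P => (Module.finrank k (res P) : ℤ)) D := by
  rw [Finsupp.linearCombination_apply, Finsupp.sum, divDeg,
    finsum_eq_sum_of_support_subset (s := D.support)]
  · simp only [smul_eq_mul, mul_comm]
  · intro P hP
    simpa using right_ne_zero_of_mul hP

lemma divDeg_add (D E : Pt →₀ ℤ) :
    divDeg k res (D + E) = divDeg k res D + divDeg k res E := by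
  simp only [divDeg_eq_linearCombination, map_add]

lemma divDeg_sub (D E : Pt →₀ ℤ) :
    divDeg k res (D - E) = divDeg k res D - divDeg k res E := by
  simp only [divDeg_eq_linearCombination, map_sub]

lemma divDeg_single (P : Pt) (n : ℤ) :
    divDeg k res (Finsupp.single P n) = n * Module.finrank k (res P) := by
  rw [divDeg_eq_linearCombination, Finsupp.linearCombination_single, smul_eq_mul]

lemma divDeg_nonneg {D : Pt →₀ ℤ} (hD : 0 ≤ D) : 0 ≤ divDeg k res D :=
  finsum_nonneg fun Q => mul_nonneg (Int.natCast_nonneg _) (hD Q)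

lemma finrank_le_divDeg {D : Pt →₀ ℤ} (hD : 0 ≤ D) {P : Pt} (hP : D P ≠ 0) :
    (Module.finrank k (res P) : ℤ) ≤ divDeg k res D := by
  have hle : Finsupp.single P 1 ≤ D := by
    classical
    intro Q
    rw [Finsupp.single_apply]
    split_ifs with hPQ
    · exact hPQ ▸ (hD P).lt_of_ne' hP
    · exact hD Q
  have hsub := divDeg_nonneg (k := k) (res := res) (sub_nonneg.2 hle)
  rwa [divDeg_sub, divDeg_single, one_mul, sub_nonneg] at hsub

end Divisors

namespace IsProjCurve

variable {k F : Type*} [Field k] [Field F] [Algebra k F]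
  {Pt : Type*} {res : Pt → Type*} [∀ P, Field (res P)] [∀ P, Algebra k (res P)]
  {ord : Pt → F → ℤ} {ev : ∀ P, F → res P}
  {L : (Pt →₀ ℤ) → Submodule k F} {t : ℕ}
  (hC : IsProjCurve k F res ord ev L t)
  {D E : Pt →₀ ℤ} {O P : Pt} {n : ℕ}

include hC

lemma ord_one (P : Pt) : ord P 1 = 0 := by
  simpa using hC.ord_algebraMap P 1 one_ne_zero

lemma ord_inv (P : Pt) {f : F} (hf : f ≠ 0) : ord P f⁻¹ = -ord P f := by
  rw [eq_neg_iff_add_eq_zero, ← hC.ord_mul P _ _ (inv_ne_zero hf) hf, inv_mul_cancel₀ hf,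
    hC.ord_one]

/-- The group of nonzero functions `f` with `|(f)| ⊆ C_{≤ n}`; the symbols with both entries in
it generate `F_n`. -/
def supportedUnits (n : ℕ) : Subgroup Fˣ where
  carrier := {f | ∀ P, ord P (f : F) ≠ 0 → Module.finrank k (res P) ≤ n}
  one_mem' P hP := absurd (hC.ord_one P) hP
  mul_mem' {f g} hf hg P hP := by
    rw [Units.val_mul, hC.ord_mul P _ _ f.ne_zero g.ne_zero] at hP
    by_cases hfP : ord P (f : F) = 0
    · exact hg P (by rwa [hfP, zero_add] at hP)
    · exact hf P hfP
  inv_mem' {f} hf P hP := by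
    rw [Units.val_inv_eq_inv_val, hC.ord_inv P f.ne_zero, neg_ne_zero] at hP
    exact hf P hP

lemma symbol_mem_Fsub {f g : Fˣ} (hf : f ∈ hC.supportedUnits n) (hg : g ∈ hC.supportedUnits n) :
    symbol f g ∈ Fsub k res ord n :=
  AddSubgroup.subset_closure ⟨f, g, hf, hg, rfl⟩

/-- The divisor `(f)` of a nonzero function `f`. -/
def principalDivisor (f : Fˣ) : Pt →₀ ℤ :=
  Finsupp.ofSupportFinite (fun P => ord P (f : F)) (hC.support_finite f f.ne_zero)

lemma divDeg_principalDivisor (f : Fˣ) : divDeg k res (hC.principalDivisor f) = 0 :=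
  hC.degree_formula f f.ne_zero

lemma coe_mem_L_iff {f : Fˣ} : (f : F) ∈ L D ↔ 0 ≤ D + hC.principalDivisor f :=
  (hC.mem_L D f).trans ⟨fun h P => h f.ne_zero P, fun h _ P => h P⟩

lemma one_mem_L (hD : 0 ≤ D) : 1 ∈ L D :=
  (hC.mem_L D 1).2 fun _ P => (hD P).trans_eq (by rw [hC.ord_one, add_zero])

lemma mul_mem_L {f g : F} (hf : f ∈ L D) (hg : g ∈ L E) : f * g ∈ L (D + E) := by
  rw [hC.mem_L] at hf hg ⊢
  intro hfg P
  have hf0 := left_ne_zero_of_mul hfg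
  have hg0 := right_ne_zero_of_mul hfg
  rw [hC.ord_mul P f g hf0 hg0, Finsupp.add_apply, add_add_add_comm]
  exact add_nonneg (hf hf0 P) (hg hg0 P)

lemma coe_mul_mem_L_iff {f g : Fˣ} :
    (f * g : F) ∈ L D ↔ (g : F) ∈ L (D + hC.principalDivisor f) := by
  have hmul : hC.principalDivisor (f * g) = hC.principalDivisor f + hC.principalDivisor g :=
    Finsupp.ext fun P => hC.ord_mul P _ _ f.ne_zero g.ne_zero
  rw [← Units.val_mul, hC.coe_mem_L_iff, hC.coe_mem_L_iff, hmul, add_assoc]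

lemma eq_zero_of_mem_L_of_divDeg_neg {f : F} (hf : f ∈ L D) (hD : divDeg k res D < 0) :
    f = 0 := by
  by_contra hf0
  have hdeg := divDeg_nonneg (k := k) (res := res) <|
    (hC.coe_mem_L_iff (f := Units.mk0 f hf0)).1 hf
  rw [divDeg_add, hC.divDeg_principalDivisor, add_zero] at hdeg
  exact hD.not_ge hdeg

lemma mem_supportedUnits_of_mem_L {f : Fˣ} (hf : (f : F) ∈ L D) (hdeg : divDeg k res D ≤ n)
    (hD : ∀ P, D P ≠ 0 → Module.finrank k (res P) ≤ n) : f ∈ hC.supportedUnits n := by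
  intro P hP
  by_cases hDP : D P = 0
  · have hle := finrank_le_divDeg (k := k) (res := res) (hC.coe_mem_L_iff.1 hf) (P := P)
      (by rwa [Finsupp.add_apply, hDP, zero_add])
    rw [divDeg_add, hC.divDeg_principalDivisor, add_zero] at hle
    exact_mod_cast hle.trans hdeg
  · exact hD P hDP

lemma mem_supportedUnits_of_mem_L_single (hO : Module.finrank k (res O) = 1) {f : Fˣ}
    (hf : (f : F) ∈ L (Finsupp.single O (n : ℤ))) : f ∈ hC.supportedUnits n := by
  refine hC.mem_supportedUnits_of_mem_L hf (by simp [divDeg_single, hO]) fun P hP => ?_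
  obtain ⟨rfl, hn⟩ := Finsupp.single_apply_ne_zero.1 hP
  rw [hO]
  exact Nat.one_le_iff_ne_zero.2 (by exact_mod_cast hn)

lemma ord_nonneg_of_mem_L (hD : D P ≤ 0) {f : F} (hf : f ∈ L D) (hf0 : f ≠ 0) : 0 ≤ ord P f := by
  linarith [(hC.mem_L D f).1 hf hf0 P]

lemma ev_mul_of_mem_L (hD : D P ≤ 0) (hE : E P ≤ 0) {f g : F} (hf : f ∈ L D) (hg : g ∈ L E) :
    ev P (f * g) = ev P f * ev P g := by
  rcases eq_or_ne f 0 with rfl | hf0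
  · rw [zero_mul, hC.ev_zero, zero_mul]
  rcases eq_or_ne g 0 with rfl | hg0
  · rw [mul_zero, hC.ev_zero, mul_zero]
  exact hC.ev_mul P f g hf0 hg0 (hC.ord_nonneg_of_mem_L hD hf hf0)
    (hC.ord_nonneg_of_mem_L hE hg hg0)

lemma ev_add_of_mem_L (hD : D P ≤ 0) {f g : F} (hf : f ∈ L D) (hg : g ∈ L D) :
    ev P (f + g) = ev P f + ev P g := by
  rcases eq_or_ne f 0 with rfl | hf0
  · rw [zero_add, hC.ev_zero, zero_add]
  rcases eq_or_ne g 0 with rfl | hg0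
  · rw [add_zero, hC.ev_zero, add_zero]
  exact hC.ev_add P f g hf0 hg0 (hC.ord_nonneg_of_mem_L hD hf hf0)
    (hC.ord_nonneg_of_mem_L hD hg hg0)

/-- Evaluation at `P` as a `k`-linear map on `L(D)`, for `D` such that the functions in `L(D)` are
regular at `P`. -/
def evL (hD : D P ≤ 0) : L D →ₗ[k] res P where
  toFun f := ev P f
  map_add' f g := hC.ev_add_of_mem_L hD f.2 g.2
  map_smul' c f := by
    have hc : algebraMap k F c ∈ L 0 := (hC.global_sections _).2 ⟨c, rfl⟩
    rw [Submodule.coe_smul, Algebra.smul_def, hC.ev_mul_of_mem_L le_rfl hD hc f.2,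
      hC.ev_algebraMap, RingHom.id_apply, Algebra.smul_def]

lemma mem_L_sub_single_of_ev_eq_zero (hD : D P = 0) {f : F} (hf : f ∈ L D) (hev : ev P f = 0) :
    f ∈ L (D - Finsupp.single P 1) := by
  classical
  rw [hC.mem_L]
  intro hf0 Q
  have hpos := (hC.ev_eq_zero_iff P f hf0 (hC.ord_nonneg_of_mem_L hD.le hf hf0)).1 hev
  have hQ := (hC.mem_L D f).1 hf hf0 Q
  rw [Finsupp.sub_apply, Finsupp.single_apply]
  split_ifs with hPQ
  · subst hPQ
    omega
  · simpa using hQ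

lemma sub_mem_L_sub_single_of_ev_eq (hD : D P = 0) {f g : F} (hf : f ∈ L D) (hg : g ∈ L D)
    (hev : ev P f = ev P g) : f - g ∈ L (D - Finsupp.single P 1) :=
  hC.mem_L_sub_single_of_ev_eq_zero hD (sub_mem hf hg) <|
    (map_sub (hC.evL hD.le) ⟨f, hf⟩ ⟨g, hg⟩).trans (sub_eq_zero.2 hev)

lemma evL_injective (hD : D P = 0) (hdeg : divDeg k res D < Module.finrank k (res P)) :
    Function.Injective (hC.evL hD.le) := fun f g hfg =>
  Subtype.ext <| sub_eq_zero.1 <|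
    hC.eq_zero_of_mem_L_of_divDeg_neg (hC.sub_mem_L_sub_single_of_ev_eq hD f.2 g.2 hfg) <| by
      rwa [divDeg_sub, divDeg_single, one_mul, sub_neg]

lemma ev_ne_zero_of_mem_L (hD : D P = 0) (hdeg : divDeg k res D < Module.finrank k (res P))
    {f : F} (hf : f ∈ L D) (hf0 : f ≠ 0) : ev P f ≠ 0 := fun hev =>
  hf0 <| congrArg Subtype.val <|
    (hC.evL_injective hD hdeg).eq_iff' (map_zero _) |>.1 (show hC.evL hD.le ⟨f, hf⟩ = 0 from hev)

lemma finrank_quotient_range_evL_le (hD : D P = 0)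
    (hdeg : divDeg k res D < Module.finrank k (res P)) :
    (Module.finrank k (res P ⧸ LinearMap.range (hC.evL hD.le)) : ℤ) ≤
      Module.finrank k (res P) + t - (divDeg k res D + 1) := by
  have := hC.finiteDimensional_res P
  have hquot := Submodule.finrank_quotient_add_finrank (LinearMap.range (hC.evL hD.le))
  rw [LinearMap.finrank_range_of_inj (hC.evL_injective hD hdeg)] at hquot
  have hrr := hC.rr_ineq D
  omega

lemma exists_mem_L_ev_eq_mul {ι : Type*} [Fintype ι] (hD : D P = 0)
    (hdeg : divDeg k res D < Module.finrank k (res P))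
    (hcard : Fintype.card ι * (Module.finrank k (res P) + t - (divDeg k res D + 1)) <
      (Module.finrank k (res P) : ℤ))
    {u : ι → res P} (hu : ∀ i, u i ≠ 0) :
    ∃ v : res P, ∃ g : ι → Fˣ, ∀ i, (g i : F) ∈ L D ∧ ev P (g i) = u i * v := by
  have := hC.finiteDimensional_res P
  have hcodim : Fintype.card ι * Module.finrank k (res P ⧸ LinearMap.range (hC.evL hD.le)) <
      Module.finrank k (res P) := by
    zify
    exact (mul_le_mul_of_nonneg_left (hC.finrank_quotient_range_evL_le hD hdeg)
      (Int.natCast_nonneg _)).trans_lt hcard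
  obtain ⟨v, hv0, hv⟩ :=
    exists_ne_zero_forall_apply_mem _ (fun i => LinearMap.mulLeft k (u i)) hcodim
  choose g hg using hv
  have hg0 (i : ι) : (g i : F) ≠ 0 := fun h =>
    mul_ne_zero (hu i) hv0 <| (hg i).symm.trans <| (congrArg (ev P) h).trans (hC.ev_zero P)
  exact ⟨v, fun i => Units.mk0 (g i) (hg0 i), fun i => ⟨(g i).2, hg i⟩⟩

lemma exists_mem_L_ev_mul_eq (hD : D P = 0)
    (hdeg : divDeg k res D < Module.finrank k (res P))
    (hcard : 3 * (Module.finrank k (res P) + t - (divDeg k res D + 1)) <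
      (Module.finrank k (res P) : ℤ))
    {f₁ f₂ g : Fˣ} (hf₁ : (f₁ : F) ∈ L D) (hf₂ : (f₂ : F) ∈ L D) (hg : (g : F) ∈ L D) :
    ∃ w x y : Fˣ, (w : F) ∈ L D ∧ (x : F) ∈ L D ∧ (y : F) ∈ L D ∧
      ev P (f₁ * x : F) = ev P (g * w : F) ∧ ev P (w * f₂ : F) = ev P (y : F) := by
  have hf₁0 := hC.ev_ne_zero_of_mem_L hD hdeg hf₁ f₁.ne_zero
  have hf₂0 := hC.ev_ne_zero_of_mem_L hD hdeg hf₂ f₂.ne_zero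
  have hg0 := hC.ev_ne_zero_of_mem_L hD hdeg hg g.ne_zero
  obtain ⟨v, l, hl⟩ := hC.exists_mem_L_ev_eq_mul (ι := Fin 3) hD hdeg hcard
    (u := ![ev P f₁, ev P g, ev P f₁ * ev P f₂]) (by simp [Fin.forall_fin_succ, hf₁0, hf₂0, hg0])
  obtain ⟨⟨hw, hevw⟩, ⟨hx, hevx⟩, hy, hevy⟩ := by simpa [Fin.forall_fin_succ] using hl
  refine ⟨l 0, l 1, l 2, hw, hx, hy, ?_, ?_⟩
  · rw [hC.ev_mul_of_mem_L hD.le hD.le hf₁ hx, hC.ev_mul_of_mem_L hD.le hD.le hg hw, hevw, hevx,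
      mul_left_comm]
  · rw [hC.ev_mul_of_mem_L hD.le hD.le hw hf₂, hevw, hevy, mul_right_comm]

lemma symbol_sub_symbol_mem_Fsub_of_ev_eq {f : Fˣ}
    (hf : hC.principalDivisor f = Finsupp.single P 1 - E) (hD : D P = 0)
    (hdeg : divDeg k res D ≤ Module.finrank k (res P) + n)
    (hDE : ∀ Q, (D - E) Q ≠ 0 → Module.finrank k (res Q) ≤ n)
    {a b : Fˣ} (ha : a ∈ hC.supportedUnits n) (hb : b ∈ hC.supportedUnits n)
    (haD : (a : F) ∈ L D) (hbD : (b : F) ∈ L D) (hev : ev P (a : F) = ev P (b : F)) :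
    symbol f a - symbol f b ∈ Fsub k res ord n := by
  rcases eq_or_ne (a : F) b with hab | hab
  · rw [Units.ext hab, sub_self]
    exact zero_mem _
  obtain ⟨g, hfg⟩ : ∃ g : Fˣ, (a : F) - b = f * g :=
    ⟨f⁻¹ * Units.mk0 _ (sub_ne_zero.2 hab), by simp⟩
  have hgL : (g : F) ∈ L (D - E) := by
    have hmem := hC.sub_mem_L_sub_single_of_ev_eq hD haD hbD hev
    rwa [hfg, hC.coe_mul_mem_L_iff, hf, sub_add_sub_cancel] at hmem
  have hEdeg : divDeg k res E = Module.finrank k (res P) := by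
    have hf0 := hC.divDeg_principalDivisor f
    rw [hf, divDeg_sub, divDeg_single, one_mul] at hf0
    exact (sub_eq_zero.1 hf0).symm
  have hg : g ∈ hC.supportedUnits n :=
    hC.mem_supportedUnits_of_mem_L hgL (by rw [divDeg_sub, hEdeg]; linarith) hDE
  rw [symbol_sub_symbol_of_sub_eq_mul hfg]
  exact hC.symbol_mem_Fsub (div_mem hg ha) (div_mem hb ha)

lemma symbol_add_sub_symbol_add_mem_Fsub (hO : Module.finrank k (res O) = 1) (hP : P ≠ O)
    (hn : Module.finrank k (res P) = n + 1) {f : Fˣ} {c : ℤ} (hE : 0 ≤ E)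
    (hEdeg : divDeg k res E ≤ n)
    (hf : hC.principalDivisor f = Finsupp.single P 1 - E - c • Finsupp.single O 1)
    {a₁ a₂ b₁ b₂ : Fˣ}
    (ha₁ : (a₁ : F) ∈ L (Finsupp.single O (n : ℤ))) (ha₂ : (a₂ : F) ∈ L (Finsupp.single O (n : ℤ)))
    (hb₁ : (b₁ : F) ∈ L (Finsupp.single O (n : ℤ))) (hb₂ : (b₂ : F) ∈ L (Finsupp.single O (n : ℤ)))
    (hev : ev P (a₁ * a₂ : F) = ev P (b₁ * b₂ : F)) :
    symbol f a₁ + symbol f a₂ - (symbol f b₁ + symbol f b₂) ∈ Fsub k res ord n := by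
  have haL := hC.mul_mem_L ha₁ ha₂
  have hbL := hC.mul_mem_L hb₁ hb₂
  have hsupp {l : Fˣ} (hl : (l : F) ∈ L (Finsupp.single O (n : ℤ))) : l ∈ hC.supportedUnits n :=
    hC.mem_supportedUnits_of_mem_L_single hO hl
  rw [← symbol_mul_right, ← symbol_mul_right]
  set D := Finsupp.single O (n : ℤ) + Finsupp.single O (n : ℤ) with hD
  have hDP : D P = 0 := by simp [hD, hP]
  have hDdeg : divDeg k res D = n + n := by simp [hD, divDeg_add, divDeg_single, hO]
  -- For `n = 0` the point `O` has degree larger than `n`, but both products are constants.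
  rcases n.eq_zero_or_pos with rfl | hpos
  · have hab : (⟨_, haL⟩ : L D) = ⟨_, hbL⟩ :=
      hC.evL_injective hDP (by rw [hDdeg, hn]; simp) hev
    have hab' : a₁ * a₂ = b₁ * b₂ := Units.ext (congrArg Subtype.val hab)
    rw [hab', sub_self]
    exact zero_mem _
  have hDE (Q : Pt) (hQ : (D - (E + c • Finsupp.single O 1) : Pt →₀ ℤ) Q ≠ 0) :
      Module.finrank k (res Q) ≤ n := by
    rcases eq_or_ne Q O with rfl | hQO
    · rwa [hO]
    · have hEQ : E Q ≠ 0 := by simpa [hD, hQO] using hQ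
      exact_mod_cast (finrank_le_divDeg hE hEQ).trans hEdeg
  rw [sub_sub] at hf
  exact hC.symbol_sub_symbol_mem_Fsub_of_ev_eq hf hDP (by rw [hDdeg, hn]; push_cast; linarith) hDE
    (mul_mem (hsupp ha₁) (hsupp ha₂)) (mul_mem (hsupp hb₁) (hsupp hb₂)) haL hbL hev

end IsProjCurve

/-- Lemma `123lemma`.  Let `C` be a regular, irreducible curve,
projective over `k`, with function field `F`, arithmetic genus `t` and a `k`-rational
point `O`.  Suppose `P ≠ O` has `d = deg(P) ≥ 3t + 1`, `f_P` has divisor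
`(P) - D_P - (d - t)(O)` with `D_P` effective of degree `t`, and `l₁⁺, l₂⁺, l₁⁻` are
nonzero elements of `RR_{d-1}`.  Then there are nonzero `m⁺, m⁻` in `RR_{d-1}` with
`{f_P, l₁⁺} + {f_P, l₂⁺} - {f_P, l₁⁻} ≡ {f_P, m⁺} - {f_P, m⁻}` modulo `F_{d-1}`. -/
theorem statement15 (k F : Type*) [Field k] [Field F] [Algebra k F]
    {Pt : Type*} (res : Pt → Type*) [∀ P, Field (res P)] [∀ P, Algebra k (res P)]
    (ord : Pt → F → ℤ) (ev : ∀ P, F → res P)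
    (L : (Pt →₀ ℤ) → Submodule k F) (t : ℕ)
    (hC : IsProjCurve k F res ord ev L t)
    (O : Pt) (hO : Module.finrank k (res O) = 1)
    (P : Pt) (hP : P ≠ O) (d : ℕ) (hd : d = Module.finrank k (res P))
    (hd1 : 3 * t + 1 ≤ d)
    (fP : Fˣ) (DP : Pt →₀ ℤ)
    (hDPeff : ∀ Q, 0 ≤ DP Q) (hDPdeg : divDeg k res DP = t)
    (hfP : ∀ Q, ord Q (fP : F) =
      ((Finsupp.single P 1 - DP - ((d : ℤ) - t) • Finsupp.single O 1 : Pt →₀ ℤ)) Q)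
    (l1p l2p l1m : Fˣ)
    (hl1p : (l1p : F) ∈ L (Finsupp.single O ((d : ℤ) - 1)))
    (hl2p : (l2p : F) ∈ L (Finsupp.single O ((d : ℤ) - 1)))
    (hl1m : (l1m : F) ∈ L (Finsupp.single O ((d : ℤ) - 1))) :
    ∃ mp mm : Fˣ,
      (mp : F) ∈ L (Finsupp.single O ((d : ℤ) - 1)) ∧
      (mm : F) ∈ L (Finsupp.single O ((d : ℤ) - 1)) ∧
      symbol fP l1p + symbol fP l2p - symbol fP l1m -
        (symbol fP mp - symbol fP mm) ∈ Fsub k res ord (d - 1) := by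
  obtain ⟨n, rfl⟩ : ∃ n, d = n + 1 := Nat.exists_eq_add_of_le' (by omega)
  simp only [Nat.cast_add, Nat.cast_one, add_sub_cancel_right, Nat.add_sub_cancel]
    at hfP hl1p hl2p hl1m ⊢
  have hDP : Finsupp.single O (n : ℤ) P = 0 := Finsupp.single_eq_of_ne hP
  have hdeg : divDeg k res (Finsupp.single O (n : ℤ)) = n := by simp [divDeg_single, hO]
  have hlt : divDeg k res (Finsupp.single O (n : ℤ)) < Module.finrank k (res P) := by omega
  obtain ⟨w, x, y, hw, hx, hy, hxw, hwy⟩ :=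
    hC.exists_mem_L_ev_mul_eq hDP hlt (by omega) hl1p hl2p hl1m
  have hone : ((1 : Fˣ) : F) ∈ L (Finsupp.single O (n : ℤ)) :=
    hC.one_mem_L (Finsupp.single_nonneg.2 (Int.natCast_nonneg n))
  have hcongr {a₁ a₂ b₁ b₂ : Fˣ} := hC.symbol_add_sub_symbol_add_mem_Fsub hO hP hd.symm hDPeff
    (by omega) (Finsupp.ext hfP) (a₁ := a₁) (a₂ := a₂) (b₁ := b₁) (b₂ := b₂)
  have hsum := add_mem (hcongr hl1p hx hl1m hw hxw)
    (hcongr hw hl2p hy hone (by rwa [Units.val_one, mul_one]))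
  rw [symbol_one_right] at hsum
  refine ⟨y, x, hy, hx, ?_⟩
  convert hsum using 1
  abel

end
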